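/- There is a group epimorphism η₁ : SO(4) → SO(3) such that η₁ ∘ η_p = ε₂₃ and η₁ ∘ η_l = ε₁₂, where η_p(D(α)) = ε₃₄(D(α)) and η_l(D(α)) = ε₁₄(D(2α))·ε₂₃(D(−α)) are the point- and line-stabilizing embeddings of SO(2) into SO(4). -/

import Mathlib

open Matrix

/-- `A ∈ SO(n)`. -/
def isSO {n : ℕ} (A : Matrix (Fin n) (Fin n) ℝ) : Prop :=
  A * A.transpose = 1 ∧ A.det = 1

/-- The point-stabilizing embedding `η_p : SO(2) → SO(4)`, `D(α) ↦ ε₃₄(D(α))`. -/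
noncomputable def etaP (α : ℝ) : Matrix (Fin 4) (Fin 4) ℝ :=
  !![1, 0, 0, 0;
     0, 1, 0, 0;
     0, 0, Real.cos α, Real.sin α;
     0, 0, -Real.sin α, Real.cos α]

/-- The line-stabilizing embedding `η_l : SO(2) → SO(4)`,
`D(α) ↦ ε₁₄(D(2α))·ε₂₃(D(−α))`. -/
noncomputable def etaL (α : ℝ) : Matrix (Fin 4) (Fin 4) ℝ :=
  !![Real.cos (2 * α), 0, 0, Real.sin (2 * α);
     0, Real.cos α, -Real.sin α, 0;
     0, Real.sin α, Real.cos α, 0;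
     -Real.sin (2 * α), 0, 0, Real.cos (2 * α)]

/-- `ε₁₂(D(α)) ∈ SO(3)`: rotation in the first two coordinates. -/
noncomputable def eps12D (α : ℝ) : Matrix (Fin 3) (Fin 3) ℝ :=
  !![Real.cos α, Real.sin α, 0;
     -Real.sin α, Real.cos α, 0;
     0, 0, 1]

/-- `ε₂₃(D(α)) ∈ SO(3)`: rotation in the last two coordinates. -/
noncomputable def eps23D (α : ℝ) : Matrix (Fin 3) (Fin 3) ℝ :=
  !![1, 0, 0;
     0, Real.cos α, Real.sin α;
     0, -Real.sin α, Real.cos α]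

/-!
Identify `R⁴` with the quaternions, so that the first basis vector is the unit. For `A ∈ SO(4)` the
vector `q = A 1` is a unit quaternion, and composing `A` with right translation by `q⁻¹` gives a
rotation fixing `1`, that is, some `X ∈ SO(3)` acting on imaginary quaternions; put `η A = X`.
Elements of `SO(3)` preserve the dot and cross products, hence are automorphisms of the quaternions.
Therefore `A (x q') = X x * A q'` for all `x` and `q'`: conjugation by `A` permutes the right
translations, so they form a normal subgroup complementing `SO(3)`, and `η` is the projection.
-/

variable {R : Type*} [CommRing R]

section Orthogonal

variable {m : Type*} [Fintype m] [DecidableEq m]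

theorem isSO_iff_mem_specialOrthogonalGroup {n : ℕ} {A : Matrix (Fin n) (Fin n) ℝ} :
    isSO A ↔ A ∈ specialOrthogonalGroup (Fin n) ℝ := by
  rw [mem_specialOrthogonalGroup_iff, mem_orthogonalGroup_iff, isSO]

theorem transpose_mem_specialOrthogonalGroup {A : Matrix m m R}
    (hA : A ∈ specialOrthogonalGroup m R) : Aᵀ ∈ specialOrthogonalGroup m R := by
  rw [mem_specialOrthogonalGroup_iff, mem_orthogonalGroup_iff', transpose_transpose, det_transpose]
  exact ⟨(mem_orthogonalGroup_iff m R).mp hA.1, hA.2⟩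

theorem mulVec_dotProduct_mulVec {A : Matrix m m R} (hA : A ∈ orthogonalGroup m R)
    (u v : m → R) : (A *ᵥ u) ⬝ᵥ (A *ᵥ v) = u ⬝ᵥ v := by
  rw [dotProduct_mulVec, ← mulVec_transpose, mulVec_mulVec,
    (mem_orthogonalGroup_iff' m R).mp hA, one_mulVec]

end Orthogonal

section CrossProduct

theorem transpose_mulVec_cross_mulVec (X : Matrix (Fin 3) (Fin 3) R) (u v : Fin 3 → R) :
    Xᵀ *ᵥ ((X *ᵥ u) ⨯₃ (X *ᵥ v)) = X.det • (u ⨯₃ v) := by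
  refine dotProduct_eq _ _ fun w => ?_
  let M : Matrix (Fin 3) (Fin 3) R := of ![w, u, v]
  have htriple : w ⬝ᵥ u ⨯₃ v = M.det := triple_product_eq_det w u v
  have hrows : ![X *ᵥ w, X *ᵥ u, X *ᵥ v] = M * Xᵀ := by
    ext i j
    fin_cases i <;> simp [M, mul_apply, mulVec, dotProduct, mul_comm]
  calc Xᵀ *ᵥ ((X *ᵥ u) ⨯₃ (X *ᵥ v)) ⬝ᵥ w
      = (X *ᵥ w) ⬝ᵥ (X *ᵥ u) ⨯₃ (X *ᵥ v) := by
        rw [mulVec_transpose, ← dotProduct_mulVec, dotProduct_comm]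
    _ = X.det * M.det := by
        rw [triple_product_eq_det, hrows, det_mul, det_transpose, mul_comm]
    _ = (X.det • (u ⨯₃ v)) ⬝ᵥ w := by
        rw [smul_dotProduct, dotProduct_comm, htriple, smul_eq_mul]

theorem mulVec_cross_mulVec {X : Matrix (Fin 3) (Fin 3) R}
    (hX : X ∈ specialOrthogonalGroup (Fin 3) R) (u v : Fin 3 → R) :
    (X *ᵥ u) ⨯₃ (X *ᵥ v) = X *ᵥ (u ⨯₃ v) := by
  have h := congrArg (X *ᵥ ·) (transpose_mulVec_cross_mulVec X u v)
  simpa only [mulVec_mulVec, (mem_orthogonalGroup_iff _ _).mp hX.1, one_mulVec,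
    (mem_specialOrthogonalGroup_iff.mp hX).2, one_smul] using h

end CrossProduct

section BlockOne

variable {n : ℕ}

/-- The block matrix `diag(1, X)`, embedding `SO(n)` into `SO(n + 1)` as the stabilizer of the first
basis vector. -/
def blockOne (X : Matrix (Fin n) (Fin n) R) : Matrix (Fin (n + 1)) (Fin (n + 1)) R :=
  of (vecCons (vecCons 1 0) fun i => vecCons 0 (X i))

theorem blockOne_mulVec_cons (X : Matrix (Fin n) (Fin n) R) (a : R) (v : Fin n → R) :
    blockOne X *ᵥ vecCons a v = vecCons a (X *ᵥ v) := by
  ext i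
  cases i using Fin.cases <;> simp [blockOne, mulVec]

theorem submatrix_succ_blockOne (X : Matrix (Fin n) (Fin n) R) :
    (blockOne X).submatrix Fin.succ Fin.succ = X :=
  rfl

theorem blockOne_injective : Function.Injective (blockOne (n := n) (R := R)) :=
  fun X Y h => by rw [← submatrix_succ_blockOne X, h, submatrix_succ_blockOne]

theorem blockOne_one : blockOne (1 : Matrix (Fin n) (Fin n) R) = 1 := by
  ext i j
  cases i using Fin.cases <;> cases j using Fin.cases <;>
    simp [blockOne, one_apply, Fin.succ_ne_zero, (Fin.succ_ne_zero _).symm]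

theorem blockOne_transpose (X : Matrix (Fin n) (Fin n) R) : (blockOne X)ᵀ = blockOne Xᵀ := by
  ext i j
  cases i using Fin.cases <;> cases j using Fin.cases <;> simp [blockOne]

theorem blockOne_mul (X Y : Matrix (Fin n) (Fin n) R) :
    blockOne (X * Y) = blockOne X * blockOne Y := by
  ext i j
  cases i using Fin.cases <;> cases j using Fin.cases <;>
    simp [blockOne, mul_apply, Fin.sum_univ_succ]

theorem submatrix_succ_blockOne_mul (X : Matrix (Fin n) (Fin n) R)
    (M : Matrix (Fin (n + 1)) (Fin (n + 1)) R) :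
    (blockOne X * M).submatrix Fin.succ Fin.succ = X * M.submatrix Fin.succ Fin.succ := by
  ext i j
  simp [blockOne, mul_apply, Fin.sum_univ_succ]

theorem det_blockOne (X : Matrix (Fin n) (Fin n) R) : (blockOne X).det = X.det := by
  have hcol (i : Fin n) : blockOne X i.succ 0 = 0 := rfl
  have hcorner : blockOne X 0 0 = 1 := rfl
  simp [det_succ_column_zero, Fin.sum_univ_succ, hcol, hcorner, submatrix_succ_blockOne]

theorem blockOne_mem_specialOrthogonalGroup_iff {X : Matrix (Fin n) (Fin n) R} :
    blockOne X ∈ specialOrthogonalGroup (Fin (n + 1)) R ↔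
      X ∈ specialOrthogonalGroup (Fin n) R := by
  simp only [mem_specialOrthogonalGroup_iff, mem_orthogonalGroup_iff, det_blockOne,
    blockOne_transpose, ← blockOne_mul, ← blockOne_one, blockOne_injective.eq_iff]

theorem blockOne_mulVec_single_zero (X : Matrix (Fin n) (Fin n) R) :
    blockOne X *ᵥ Pi.single 0 1 = Pi.single 0 1 := by
  ext i
  cases i using Fin.cases <;> simp [blockOne]

theorem blockOne_submatrix_succ {A : Matrix (Fin (n + 1)) (Fin (n + 1)) R}
    (hA : A ∈ orthogonalGroup (Fin (n + 1)) R) (hfix : A *ᵥ Pi.single 0 1 = Pi.single 0 1) :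
    blockOne (A.submatrix Fin.succ Fin.succ) = A := by
  have hfix' : Aᵀ *ᵥ Pi.single 0 1 = Pi.single 0 1 := by
    conv_lhs => rw [← hfix, mulVec_mulVec, (mem_orthogonalGroup_iff' _ _).mp hA, one_mulVec]
  have hcol (i) : A i 0 = Pi.single (M := fun _ => R) 0 1 i := by
    rw [← hfix, mulVec_single_one, col_apply]
  have hrow (j) : A 0 j = Pi.single (M := fun _ => R) 0 1 j := by
    rw [← hfix', mulVec_single_one, col_apply, transpose_apply]
  ext i j
  cases i using Fin.cases <;> cases j using Fin.cases <;> simp [blockOne, hrow, hcol]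

end BlockOne

section RightTranslation

open Quaternion

/-- The matrix of the right translation `x ↦ x * q` of the quaternions in the basis `1, i, j, k`. -/
def mulRightMatrix (q : Fin 4 → R) : Matrix (Fin 4) (Fin 4) R :=
  !![q 0, -q 1, -q 2, -q 3;
     q 1, q 0, q 3, -q 2;
     q 2, -q 3, q 0, q 1;
     q 3, q 2, -q 1, q 0]

theorem mulRightMatrix_equivTuple_mulVec (q x : ℍ[R]) :
    mulRightMatrix (equivTuple R q) *ᵥ equivTuple R x = equivTuple R (x * q) := by
  ext i
  fin_cases i <;> simp [mulRightMatrix, mulVec, dotProduct, Fin.sum_univ_four] <;> ring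

theorem mulRightMatrix_mul (p q : Fin 4 → R) :
    mulRightMatrix p * mulRightMatrix q = mulRightMatrix (mulRightMatrix p *ᵥ q) := by
  refine ext_iff_mulVec.mpr fun x => ?_
  obtain ⟨p, rfl⟩ := (equivTuple R).surjective p
  obtain ⟨q, rfl⟩ := (equivTuple R).surjective q
  obtain ⟨x, rfl⟩ := (equivTuple R).surjective x
  simp only [← mulVec_mulVec, mulRightMatrix_equivTuple_mulVec, mul_assoc]

theorem mulRightMatrix_mulVec_cons (a b : R) (u v : Fin 3 → R) :
    mulRightMatrix (vecCons a u) *ᵥ vecCons b v =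
      vecCons (b * a - v ⬝ᵥ u) (b • u + a • v + v ⨯₃ u) := by
  ext i
  fin_cases i <;>
    simp [mulRightMatrix, mulVec, dotProduct, Fin.sum_univ_succ, cross_apply, vecHead, vecTail] <;>
    ring

theorem mulRightMatrix_mulVec_single_zero (q : Fin 4 → R) :
    mulRightMatrix q *ᵥ Pi.single 0 1 = q := by
  ext i
  fin_cases i <;> simp [mulRightMatrix]

theorem mulRightMatrix_single_zero :
    mulRightMatrix (Pi.single 0 1 : Fin 4 → R) = 1 := by
  ext i j
  fin_cases i <;> fin_cases j <;> simp [mulRightMatrix]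

theorem mulRightMatrix_mul_transpose (q : Fin 4 → R) :
    mulRightMatrix q * (mulRightMatrix q)ᵀ = (q ⬝ᵥ q) • 1 := by
  ext i j
  fin_cases i <;> fin_cases j <;>
    simp [mulRightMatrix, mul_apply, dotProduct, Fin.sum_univ_four] <;> ring

theorem det_mulRightMatrix (q : Fin 4 → R) : (mulRightMatrix q).det = (q ⬝ᵥ q) ^ 2 := by
  simp [mulRightMatrix, det_succ_row_zero, dotProduct, Fin.sum_univ_succ, Fin.succAbove]
  ring

theorem mulRightMatrix_mem_specialOrthogonalGroup {q : Fin 4 → R} (hq : q ⬝ᵥ q = 1) :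
    mulRightMatrix q ∈ specialOrthogonalGroup (Fin 4) R := by
  rw [mem_specialOrthogonalGroup_iff, mem_orthogonalGroup_iff, mulRightMatrix_mul_transpose,
    det_mulRightMatrix, hq, one_smul, one_pow]
  exact ⟨rfl, rfl⟩

-- `blockOne X` acts on the quaternions as an algebra automorphism.
theorem blockOne_mul_mulRightMatrix {X : Matrix (Fin 3) (Fin 3) R}
    (hX : X ∈ specialOrthogonalGroup (Fin 3) R) (q : Fin 4 → R) :
    blockOne X * mulRightMatrix q = mulRightMatrix (blockOne X *ᵥ q) * blockOne X := by
  refine ext_iff_mulVec.mpr fun x => ?_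
  obtain ⟨a, u, rfl⟩ : ∃ a u, q = vecCons a u := ⟨_, _, (cons_head_tail q).symm⟩
  obtain ⟨b, v, rfl⟩ : ∃ b v, x = vecCons b v := ⟨_, _, (cons_head_tail x).symm⟩
  rw [← mulVec_mulVec, ← mulVec_mulVec, blockOne_mulVec_cons, blockOne_mulVec_cons,
    mulRightMatrix_mulVec_cons, mulRightMatrix_mulVec_cons, blockOne_mulVec_cons,
    mulVec_dotProduct_mulVec hX.1, mulVec_cross_mulVec hX, mulVec_add, mulVec_add, mulVec_smul,
    mulVec_smul]

end RightTranslation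

section RotationPart

/-- The quotient map of `SO(4)` by the right translations, with values in `SO(3)`: the rotation of
the imaginary quaternions obtained by composing `A` with right translation by the conjugate of the
image `A *ᵥ Pi.single 0 1` of the quaternion `1`. -/
def rotationPart (A : Matrix (Fin 4) (Fin 4) R) : Matrix (Fin 3) (Fin 3) R :=
  ((mulRightMatrix (A *ᵥ Pi.single 0 1))ᵀ * A).submatrix Fin.succ Fin.succ

theorem rotationPart_blockOne (X : Matrix (Fin 3) (Fin 3) R) : rotationPart (blockOne X) = X := by
  rw [rotationPart, blockOne_mulVec_single_zero, mulRightMatrix_single_zero, transpose_one,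
    one_mul, submatrix_succ_blockOne]

variable {A : Matrix (Fin 4) (Fin 4) R}

theorem mulRightMatrix_mulVec_single_zero_mem (hA : A ∈ orthogonalGroup (Fin 4) R) :
    mulRightMatrix (A *ᵥ Pi.single 0 1) ∈ specialOrthogonalGroup (Fin 4) R :=
  mulRightMatrix_mem_specialOrthogonalGroup <| by
    rw [mulVec_dotProduct_mulVec hA, single_dotProduct, Pi.single_eq_same, one_mul]

theorem blockOne_rotationPart (hA : A ∈ orthogonalGroup (Fin 4) R) :
    blockOne (rotationPart A) = (mulRightMatrix (A *ᵥ Pi.single 0 1))ᵀ * A := by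
  have hT := mulRightMatrix_mulVec_single_zero_mem hA
  refine blockOne_submatrix_succ (mul_mem (transpose_mem_specialOrthogonalGroup hT).1 hA) ?_
  set q := A *ᵥ Pi.single 0 1
  calc ((mulRightMatrix q)ᵀ * A) *ᵥ Pi.single 0 1
      = (mulRightMatrix q)ᵀ *ᵥ (mulRightMatrix q *ᵥ Pi.single 0 1) := by
        rw [← mulVec_mulVec, mulRightMatrix_mulVec_single_zero]
    _ = Pi.single 0 1 := by
        rw [mulVec_mulVec, (mem_orthogonalGroup_iff' _ _).mp hT.1, one_mulVec]

theorem rotationPart_mem_specialOrthogonalGroup (hA : A ∈ specialOrthogonalGroup (Fin 4) R) :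
    rotationPart A ∈ specialOrthogonalGroup (Fin 3) R := by
  rw [← blockOne_mem_specialOrthogonalGroup_iff, blockOne_rotationPart hA.1]
  exact mul_mem (transpose_mem_specialOrthogonalGroup
    (mulRightMatrix_mulVec_single_zero_mem hA.1)) hA

theorem mulRightMatrix_mul_blockOne_rotationPart (hA : A ∈ orthogonalGroup (Fin 4) R) :
    mulRightMatrix (A *ᵥ Pi.single 0 1) * blockOne (rotationPart A) = A := by
  rw [blockOne_rotationPart hA, ← mul_assoc,
    (mem_orthogonalGroup_iff _ _).mp (mulRightMatrix_mulVec_single_zero_mem hA).1, one_mul]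

theorem mul_mulRightMatrix (hA : A ∈ specialOrthogonalGroup (Fin 4) R) (q : Fin 4 → R) :
    A * mulRightMatrix q = mulRightMatrix (A *ᵥ q) * blockOne (rotationPart A) := by
  set X := rotationPart A
  set p := A *ᵥ Pi.single 0 1
  have hfactor : mulRightMatrix p * blockOne X = A :=
    mulRightMatrix_mul_blockOne_rotationPart hA.1
  calc A * mulRightMatrix q
      = mulRightMatrix p * (blockOne X * mulRightMatrix q) := by rw [← mul_assoc, hfactor]
    _ = mulRightMatrix p * mulRightMatrix (blockOne X *ᵥ q) * blockOne X := by
        rw [blockOne_mul_mulRightMatrix (rotationPart_mem_specialOrthogonalGroup hA), mul_assoc]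
    _ = mulRightMatrix (A *ᵥ q) * blockOne X := by
        rw [mulRightMatrix_mul, mulVec_mulVec, hfactor]

theorem transpose_mulRightMatrix_mulVec_mul (hA : A ∈ specialOrthogonalGroup (Fin 4) R)
    (q : Fin 4 → R) :
    (mulRightMatrix (A *ᵥ q))ᵀ * A = blockOne (rotationPart A) * (mulRightMatrix q)ᵀ := by
  set X := rotationPart A
  have hX : blockOne X * (blockOne X)ᵀ = 1 := (mem_orthogonalGroup_iff _ _).mp
    (blockOne_mem_specialOrthogonalGroup_iff.mpr (rotationPart_mem_specialOrthogonalGroup hA)).1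
  calc (mulRightMatrix (A *ᵥ q))ᵀ * A
      = (mulRightMatrix (A *ᵥ q) * (blockOne X * (blockOne X)ᵀ))ᵀ * A := by rw [hX, mul_one]
    _ = (A * mulRightMatrix q * (blockOne X)ᵀ)ᵀ * A := by rw [← mul_assoc, ← mul_mulRightMatrix hA]
    _ = blockOne X * (mulRightMatrix q)ᵀ * (Aᵀ * A) := by
        simp only [transpose_mul, transpose_transpose, mul_assoc]
    _ = blockOne X * (mulRightMatrix q)ᵀ := by
        rw [(mem_orthogonalGroup_iff' _ _).mp hA.1, mul_one]

theorem rotationPart_mul (hA : A ∈ specialOrthogonalGroup (Fin 4) R)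
    (B : Matrix (Fin 4) (Fin 4) R) : rotationPart (A * B) = rotationPart A * rotationPart B := by
  rw [rotationPart, ← mulVec_mulVec, ← mul_assoc, transpose_mulRightMatrix_mulVec_mul hA,
    mul_assoc, submatrix_succ_blockOne_mul, ← rotationPart]

end RotationPart

theorem rotationPart_etaP (α : ℝ) : rotationPart (etaP α) = eps23D α := by
  have h : etaP α = blockOne (eps23D α) := by
    ext i j
    fin_cases i <;> fin_cases j <;> rfl
  rw [h, rotationPart_blockOne]

theorem rotationPart_etaL (α : ℝ) : rotationPart (etaL α) = eps12D α := by
  have hcos : Real.cos α = Real.cos (2 * α) * Real.cos α + Real.sin (2 * α) * Real.sin α := by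
    rw [← Real.cos_sub]; ring_nf
  have hsin : Real.sin α = Real.sin (2 * α) * Real.cos α - Real.cos (2 * α) * Real.sin α := by
    rw [← Real.sin_sub]; ring_nf
  have hunit := Real.sin_sq_add_cos_sq (2 * α)
  ext i j
  fin_cases i <;> fin_cases j <;>
    simp [rotationPart, mulRightMatrix, etaL, eps12D, mul_apply, Fin.sum_univ_four] <;> linarith

/-- There is a group epimorphism `η₁ : SO(4) → SO(3)` with `η₁ ∘ η_p = ε₂₃` and
`η₁ ∘ η_l = ε₁₂`. -/
theorem stmt19 :
    ∃ η : Matrix (Fin 4) (Fin 4) ℝ → Matrix (Fin 3) (Fin 3) ℝ,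
      (∀ A B : Matrix (Fin 4) (Fin 4) ℝ, isSO A → isSO B → η (A * B) = η A * η B) ∧
      (∀ A : Matrix (Fin 4) (Fin 4) ℝ, isSO A → isSO (η A)) ∧
      (∀ X : Matrix (Fin 3) (Fin 3) ℝ, isSO X → ∃ A, isSO A ∧ η A = X) ∧
      (∀ α : ℝ, η (etaP α) = eps23D α) ∧
      (∀ α : ℝ, η (etaL α) = eps12D α) := by
  simp only [isSO_iff_mem_specialOrthogonalGroup]
  exact ⟨rotationPart, fun _ B hA _ => rotationPart_mul hA B,
    fun _ => rotationPart_mem_specialOrthogonalGroup,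
    fun X hX => ⟨blockOne X, blockOne_mem_specialOrthogonalGroup_iff.mpr hX,
      rotationPart_blockOne X⟩,
    rotationPart_etaP, rotationPart_etaL⟩
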